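/- Let r : C1 → C2 be an F-linear exact (triangulated) functor between F-linear triangulated categories equipped with weight structures. Assume: (1) the weight structure on C1 is bounded; (2) the heart C_{1,w=0} is semi-primary and pseudo-Abelian; (3) r is weight exact; (4) the induced functor r_{w=0} on hearts is full; (5) r_{w=0} is conservative. Then for any M ∈ C1 and any integers α ≤ β: M is without weights α, α+1, …, β if and only if r(M) is without weights α, α+1, …, β. -/

import Mathlib

open CategoryTheory CategoryTheory.Limits CategoryTheory.Pretriangulated

namespace Paper

/-- A morphism `f : X ⟶ Y` belongs to the radical of a preadditive category if,
for every `g : Y ⟶ X`, the endomorphism `𝟙 X - g ∘ f` is invertible. -/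
def InRadical {C : Type*} [Category C] [Preadditive C] {X Y : C} (f : X ⟶ Y) : Prop :=
  ∀ g : Y ⟶ X, IsIso (𝟙 X - f ≫ g)

/-- The Jacobson radical of a (possibly noncommutative) ring, as a two-sided ideal. -/
def ringRadical (R : Type*) [Ring R] : TwoSidedIdeal R :=
  TwoSidedIdeal.jacobson ⊥

/-- A ring is semi-primary if its (Jacobson) radical is nilpotent and the quotient by
the radical is a semisimple ring. -/
def IsSemiprimaryRing (R : Type*) [Ring R] : Prop :=
  IsSemisimpleRing (ringRadical R).ringCon.Quotient ∧
    ∃ n : ℕ, ∀ f : Fin n → R, (∀ i, f i ∈ ringRadical R) → (List.ofFn f).prod = 0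

/-- A class of objects of a preadditive category is semi-primary (André–Kahn) if the
endomorphism ring of each of its objects is a semi-primary ring; for an object `X`,
the radical ideal `rad(X,X)` is exactly the Jacobson radical of `End X`. -/
def SemiprimaryOn {C : Type*} [Category C] [Preadditive C] (P : Set C) : Prop :=
  ∀ X : C, X ∈ P → IsSemiprimaryRing (CategoryTheory.End X)

/-- A class of objects is pseudo-Abelian (idempotent complete) if every idempotent
endomorphism of one of its objects splits through an object of the class. -/
def PseudoAbelianOn {C : Type*} [Category C] [Preadditive C] (P : Set C) : Prop :=
  ∀ X : C, X ∈ P → ∀ e : X ⟶ X, e ≫ e = e →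
    ∃ (Y : C) (_ : Y ∈ P) (p : X ⟶ Y) (i : Y ⟶ X), p ≫ i = e ∧ i ≫ p = 𝟙 Y

variable (C : Type*) [Category C] [Preadditive C] [HasZeroObject C] [HasShift C ℤ]
  [∀ n : ℤ, (CategoryTheory.shiftFunctor C n).Additive] [Pretriangulated C]

/-- A weight structure on a pretriangulated category: classes `le = C_{w≤0}` and
`ge = C_{w≥0}`, additive (containing zero objects, closed under finite direct sums)
and closed under retracts, with `C_{w≤0} ⊆ C_{w≤1}`, `C_{w≥1} ⊆ C_{w≥0}`,
orthogonality, and existence of weight decompositions. -/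
structure WeightStructure where
  le : Set C
  ge : Set C
  le_retract : ∀ {X Y : C} (i : X ⟶ Y) (p : Y ⟶ X), i ≫ p = 𝟙 X → Y ∈ le → X ∈ le
  ge_retract : ∀ {X Y : C} (i : X ⟶ Y) (p : Y ⟶ X), i ≫ p = 𝟙 X → Y ∈ ge → X ∈ ge
  le_zero : ∀ X : C, IsZero X → X ∈ le
  ge_zero : ∀ X : C, IsZero X → X ∈ ge
  le_add : ∀ {X Y : C} (b : BinaryBicone X Y), b.IsBilimit → X ∈ le → Y ∈ le → b.pt ∈ le
  ge_add : ∀ {X Y : C} (b : BinaryBicone X Y), b.IsBilimit → X ∈ ge → Y ∈ ge → b.pt ∈ ge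
  le_shift : ∀ X : C, X ∈ le → X⟦(-1 : ℤ)⟧ ∈ le
  ge_shift : ∀ X : C, X ∈ ge → X⟦(1 : ℤ)⟧ ∈ ge
  orthogonal : ∀ {X Y : C}, X ∈ le → Y⟦(-1 : ℤ)⟧ ∈ ge → ∀ f : X ⟶ Y, f = 0
  exists_decomp : ∀ M : C, ∃ (A B : C) (f : A ⟶ M) (g : M ⟶ B) (h : B ⟶ A⟦(1 : ℤ)⟧),
    (Triangle.mk f g h ∈ distTriang C) ∧ A ∈ le ∧ B⟦(-1 : ℤ)⟧ ∈ ge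

namespace WeightStructure

variable {C} (w : WeightStructure C)

/-- `C_{w ≤ n} := C_{w ≤ 0}[n]`. -/
def leN (n : ℤ) : Set C := {X : C | X⟦-n⟧ ∈ w.le}

/-- `C_{w ≥ n} := C_{w ≥ 0}[n]`. -/
def geN (n : ℤ) : Set C := {X : C | X⟦-n⟧ ∈ w.ge}

/-- The heart `C_{w = 0} = C_{w ≤ 0} ∩ C_{w ≥ 0}`. -/
def heart : Set C := w.leN 0 ∩ w.geN 0

/-- The weight structure is bounded if every object lies in
`C_{w ≥ m} ∩ C_{w ≤ n}` for some integers `m ≤ n`. -/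
def Bounded : Prop := ∀ M : C, ∃ m n : ℤ, m ≤ n ∧ M ∈ w.geN m ∧ M ∈ w.leN n

end WeightStructure

/-- A weight filtration of `M` concentrated at `n`: an exact triangle
`M_{≤ n-1} ⟶ M ⟶ M_{≥ n} ⟶(δ) M_{≤ n-1}[1]` with the two outer terms in
`C_{w ≤ n-1}` and `C_{w ≥ n}` respectively. -/
def IsWeightFiltrationAt {C : Type*} [Category C] [Preadditive C] [HasZeroObject C]
    [HasShift C ℤ] [∀ n : ℤ, (CategoryTheory.shiftFunctor C n).Additive] [Pretriangulated C]
    (w : WeightStructure C) (n : ℤ) {A M B : C}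
    (f : A ⟶ M) (g : M ⟶ B) (δ : B ⟶ A⟦(1 : ℤ)⟧) : Prop :=
  (Triangle.mk f g δ ∈ distTriang C) ∧ A ∈ w.leN (n - 1) ∧ B ∈ w.geN n

/-- A minimal weight filtration concentrated at `n`: a weight filtration concentrated
at `n` whose connecting morphism lies in the radical. -/
def IsMinimalWeightFiltrationAt {C : Type*} [Category C] [Preadditive C] [HasZeroObject C]
    [HasShift C ℤ] [∀ n : ℤ, (CategoryTheory.shiftFunctor C n).Additive] [Pretriangulated C]
    (w : WeightStructure C) (n : ℤ) {A M B : C}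
    (f : A ⟶ M) (g : M ⟶ B) (δ : B ⟶ A⟦(1 : ℤ)⟧) : Prop :=
  IsWeightFiltrationAt w n f g δ ∧ InRadical δ

/-- `M` is without weights `α, α+1, …, β` if it admits a weight filtration avoiding
these weights. -/
def WithoutWeights {C : Type*} [Category C] [Preadditive C] [HasZeroObject C]
    [HasShift C ℤ] [∀ n : ℤ, (CategoryTheory.shiftFunctor C n).Additive] [Pretriangulated C]
    (w : WeightStructure C) (α β : ℤ) (M : C) : Prop :=
  ∃ (A B : C) (f : A ⟶ M) (g : M ⟶ B) (δ : B ⟶ A⟦(1 : ℤ)⟧),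
    (Triangle.mk f g δ ∈ distTriang C) ∧ A ∈ w.leN (α - 1) ∧ B ∈ w.geN (β + 1)

/-- A functor is weight exact if it respects both classes of the weight structures. -/
def WeightExact {C₁ : Type*} [Category C₁] [Preadditive C₁] [HasZeroObject C₁] [HasShift C₁ ℤ]
    [∀ n : ℤ, (CategoryTheory.shiftFunctor C₁ n).Additive] [Pretriangulated C₁]
    {C₂ : Type*} [Category C₂] [Preadditive C₂] [HasZeroObject C₂] [HasShift C₂ ℤ]
    [∀ n : ℤ, (CategoryTheory.shiftFunctor C₂ n).Additive] [Pretriangulated C₂]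
    (w₁ : WeightStructure C₁) (w₂ : WeightStructure C₂) (r : C₁ ⥤ C₂) : Prop :=
  (∀ X : C₁, X ∈ w₁.le → r.obj X ∈ w₂.le) ∧ (∀ X : C₁, X ∈ w₁.ge → r.obj X ∈ w₂.ge)


section Basics

variable {D : Type*} [Category D] [Preadditive D] [HasZeroObject D] [HasShift D ℤ]
  [∀ n : ℤ, (CategoryTheory.shiftFunctor D n).Additive] [Pretriangulated D]
  (w : WeightStructure D)

variable {A M B : D} {f : A ⟶ M} {g : M ⟶ B} {δ : B ⟶ A⟦(1 : ℤ)⟧} in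
lemma yo2 (hT : Triangle.mk f g δ ∈ distTriang D) {W : D} (h : M ⟶ W) (hh : f ≫ h = 0) :
    ∃ k : B ⟶ W, h = g ≫ k := Triangle.yoneda_exact₂ _ hT h hh

variable {A M B : D} {f : A ⟶ M} {g : M ⟶ B} {δ : B ⟶ A⟦(1 : ℤ)⟧} in
lemma yo3 (hT : Triangle.mk f g δ ∈ distTriang D) {W : D} (h : B ⟶ W) (hh : g ≫ h = 0) :
    ∃ k : A⟦(1 : ℤ)⟧ ⟶ W, h = δ ≫ k := Triangle.yoneda_exact₃ _ hT h hh

variable {A M B : D} {f : A ⟶ M} {g : M ⟶ B} {δ : B ⟶ A⟦(1 : ℤ)⟧} in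
lemma coyo2 (hT : Triangle.mk f g δ ∈ distTriang D) {W : D} (h : W ⟶ M) (hh : h ≫ g = 0) :
    ∃ k : W ⟶ A, h = k ≫ f := Triangle.coyoneda_exact₂ _ hT h hh

variable {A M B : D} {f : A ⟶ M} {g : M ⟶ B} {δ : B ⟶ A⟦(1 : ℤ)⟧} in
lemma coyo1 (hT : Triangle.mk f g δ ∈ distTriang D) :
    ∃ v : B⟦(-1 : ℤ)⟧ ⟶ A, ∀ {W : D} (h : W ⟶ A), h ≫ f = 0 →
    ∃ k : W ⟶ B⟦(-1 : ℤ)⟧, h = k ≫ v :=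
  ⟨(Triangle.mk f g δ).invRotate.mor₁, fun h hh =>
    Triangle.coyoneda_exact₂ _ (inv_rot_of_distTriang _ hT) h hh⟩

variable {A M B : D} {f : A ⟶ M} {g : M ⟶ B} {δ : B ⟶ A⟦(1 : ℤ)⟧} in
lemma z12 (hT : Triangle.mk f g δ ∈ distTriang D) : f ≫ g = 0 :=
  comp_distTriang_mor_zero₁₂ _ hT

variable {A M B : D} {f : A ⟶ M} {g : M ⟶ B} {δ : B ⟶ A⟦(1 : ℤ)⟧} in
lemma z23 (hT : Triangle.mk f g δ ∈ distTriang D) : g ≫ δ = 0 :=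
  comp_distTriang_mor_zero₂₃ _ hT

lemma le_iso {X Y : D} (e : X ≅ Y) (h : X ∈ w.le) : Y ∈ w.le :=
  w.le_retract e.inv e.hom (by simp) h

lemma ge_iso {X Y : D} (e : X ≅ Y) (h : X ∈ w.ge) : Y ∈ w.ge :=
  w.ge_retract e.inv e.hom (by simp) h

lemma leN_retract {n : ℤ} {X Y : D} (i : X ⟶ Y) (p : Y ⟶ X) (h : i ≫ p = 𝟙 X)
    (hY : Y ∈ w.leN n) : X ∈ w.leN n :=
  w.le_retract (i⟦-n⟧') (p⟦-n⟧') (by rw [← Functor.map_comp, h, CategoryTheory.Functor.map_id]) hY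

lemma geN_retract {n : ℤ} {X Y : D} (i : X ⟶ Y) (p : Y ⟶ X) (h : i ≫ p = 𝟙 X)
    (hY : Y ∈ w.geN n) : X ∈ w.geN n :=
  w.ge_retract (i⟦-n⟧') (p⟦-n⟧') (by rw [← Functor.map_comp, h, CategoryTheory.Functor.map_id]) hY

lemma leN_shift {n k m : ℤ} (hm : n + k = m) {X : D} (hX : X ∈ w.leN n) : X⟦k⟧ ∈ w.leN m :=
  le_iso w ((shiftFunctorAdd' D k (-m) (-n) (by omega)).app X) hX

lemma geN_shift {n k m : ℤ} (hm : n + k = m) {X : D} (hX : X ∈ w.geN n) : X⟦k⟧ ∈ w.geN m :=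
  ge_iso w ((shiftFunctorAdd' D k (-m) (-n) (by omega)).app X) hX

lemma leN_succ {n : ℤ} {X : D} (hX : X ∈ w.leN n) : X ∈ w.leN (n + 1) :=
  le_iso w ((shiftFunctorAdd' D (-n) (-1) (-(n+1)) (by omega)).symm.app X) (w.le_shift _ hX)

lemma geN_pred {n : ℤ} {X : D} (hX : X ∈ w.geN (n + 1)) : X ∈ w.geN n :=
  ge_iso w ((shiftFunctorAdd' D (-(n+1)) 1 (-n) (by omega)).symm.app X) (w.ge_shift _ hX)

lemma leN_mono {n m : ℤ} (h : n ≤ m) {X : D} (hX : X ∈ w.leN n) : X ∈ w.leN m := by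
  induction m, h using Int.leInduction with
  | base => exact hX
  | succ k _ ih => exact leN_succ w ih

lemma geN_anti {n m : ℤ} (h : n ≤ m) {X : D} (hX : X ∈ w.geN m) : X ∈ w.geN n := by
  induction m, h using Int.leInduction with
  | base => exact hX
  | succ k _ ih => exact ih (geN_pred w hX)

lemma orth {n m : ℤ} (hnm : n < m) {X Y : D} (hX : X ∈ w.leN n) (hY : Y ∈ w.geN m)
    (f : X ⟶ Y) : f = 0 := by
  have hY' : Y ∈ w.geN (n + 1) := geN_anti w (by omega) hY
  have : f⟦-n⟧' = 0 := w.orthogonal hX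
    (ge_iso w ((shiftFunctorAdd' D (-n) (-1) (-(n+1)) (by omega)).app Y) hY') _
  exact (Functor.map_eq_zero_iff (CategoryTheory.shiftFunctor D (-n))).1 this

/-- weight decompositions at level `n`. -/
lemma decomp (n m : ℤ) (hm : n + 1 = m) (M : D) :
    ∃ (A B : D) (f : A ⟶ M) (g : M ⟶ B) (h : B ⟶ A⟦(1 : ℤ)⟧),
      (Triangle.mk f g h ∈ distTriang D) ∧ A ∈ w.leN n ∧ B ∈ w.geN m := by
  obtain ⟨A, B, f, g, h, hT, hA, hB⟩ := w.exists_decomp (M⟦-n⟧)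
  have hT' := Triangle.shift_distinguished _ hT n
  let e : (M⟦-n⟧)⟦n⟧ ≅ M := (shiftFunctorCompIsoId D (-n) n (by omega)).app M
  obtain ⟨f', hf'⟩ : ∃ f' : A⟦n⟧ ⟶ (M⟦-n⟧)⟦n⟧,
      f' = ((CategoryTheory.shiftFunctor (Triangle D) n).obj (Triangle.mk f g h)).mor₁ := ⟨_, rfl⟩
  obtain ⟨g', hg'⟩ : ∃ g' : (M⟦-n⟧)⟦n⟧ ⟶ B⟦n⟧,
      g' = ((CategoryTheory.shiftFunctor (Triangle D) n).obj (Triangle.mk f g h)).mor₂ := ⟨_, rfl⟩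
  obtain ⟨h', hh'⟩ : ∃ h' : B⟦n⟧ ⟶ (A⟦n⟧)⟦(1 : ℤ)⟧,
      h' = ((CategoryTheory.shiftFunctor (Triangle D) n).obj (Triangle.mk f g h)).mor₃ := ⟨_, rfl⟩
  have hT2 : Triangle.mk f' g' h' ∈ distTriang D := by
    rw [hf', hg', hh']; exact hT'
  have hh : Triangle.mk (f' ≫ e.hom) (e.inv ≫ g') h' ∈ distTriang D := by
    refine isomorphic_distinguished _ hT2 _ ?_
    refine Triangle.isoMk _ _ (Iso.refl _) e.symm (Iso.refl _) ?_ ?_ ?_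
    · change (f' ≫ e.hom) ≫ e.inv = 𝟙 _ ≫ f'
      simp
    · change (e.inv ≫ g') ≫ 𝟙 _ = e.inv ≫ g'
      simp
    · change h' ≫ (CategoryTheory.shiftFunctor D (1 : ℤ)).map (𝟙 _) = 𝟙 _ ≫ h'
      simp
  have hA0 : A ∈ w.leN 0 := le_iso w ((shiftFunctorZero' D (-0) (by simp)).symm.app A) hA
  have hB1 : B ∈ w.geN 1 := hB
  exact ⟨A⟦n⟧, B⟦n⟧, _, _, _, hh, leN_shift w (by omega) hA0, geN_shift w (by omega) hB1⟩

/-- in a triangle `A → M → B`, `M, A ≥ n`-type closure:  `A ≥ n` when `M ≥ n`, `B ≥ n + 1`. -/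
lemma geN_of_orth {n : ℤ} {X : D}
    (h : ∀ (W : D), W ∈ w.leN (n - 1) → ∀ f : W ⟶ X, f = 0) : X ∈ w.geN n := by
  obtain ⟨A, B, f, g, δ, hT, hA, hB⟩ := decomp w (n - 1) n (by omega) X
  have hf := h A hA f
  obtain ⟨ρ, hρ⟩ := yo2 hT (𝟙 X) (by simp [hf])
  exact geN_retract w g ρ hρ.symm hB

lemma leN_of_orth {n : ℤ} {X : D}
    (h : ∀ (W : D), W ∈ w.geN (n + 1) → ∀ f : X ⟶ W, f = 0) : X ∈ w.leN n := by
  obtain ⟨A, B, f, g, δ, hT, hA, hB⟩ := decomp w n (n + 1) (by omega) X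
  have hg := h B hB g
  obtain ⟨ρ, hρ⟩ := coyo2 hT (𝟙 X) (by simp [hg])
  exact leN_retract w ρ f hρ.symm hA

lemma geN_left {n : ℤ} {A M B : D} {f : A ⟶ M} {g : M ⟶ B} {δ : B ⟶ A⟦(1 : ℤ)⟧}
    (hT : Triangle.mk f g δ ∈ distTriang D) (hM : M ∈ w.geN n) (hB : B ∈ w.geN (n + 1)) :
    A ∈ w.geN n := by
  refine geN_of_orth w fun W hW h => ?_
  obtain ⟨v, hv⟩ := coyo1 hT
  obtain ⟨k, hk⟩ := hv h (orth w (by omega) hW hM _)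
  rw [hk, show k = 0 from orth w (by omega) hW (geN_shift w (m := n) (by omega) hB) k]
  simp

lemma leN_right {n : ℤ} {A M B : D} {f : A ⟶ M} {g : M ⟶ B} {δ : B ⟶ A⟦(1 : ℤ)⟧}
    (hT : Triangle.mk f g δ ∈ distTriang D) (hM : M ∈ w.leN n) (hA : A ∈ w.leN (n - 1)) :
    B ∈ w.leN n := by
  refine leN_of_orth w fun W hW h => ?_
  obtain ⟨k, hk⟩ := yo3 hT h (orth w (by omega) hM hW _)
  rw [hk, show k = 0 from orth w (by omega) (leN_shift w (m := n) (by omega) hA) hW k]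
  simp

/-- A split monomorphism has a complement. -/
lemma exists_complement {Z B : D} (s : Z ⟶ B) (ρ : B ⟶ Z) (h : s ≫ ρ = 𝟙 Z) :
    ∃ (B' : D) (u : B' ⟶ B) (p : B ⟶ B'), u ≫ p = 𝟙 B' ∧ p ≫ u = 𝟙 B - ρ ≫ s := by
  obtain ⟨B', p, δ, hT⟩ := distinguished_cocone_triangle s
  have hsp : s ≫ p = 0 := z12 hT
  obtain ⟨u, hu⟩ := yo2 hT (𝟙 B - ρ ≫ s)
    (by simp [Preadditive.comp_sub, reassoc_of% h])
  have : Mono s := (SplitMono.mk ρ h).mono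
  have he : Epi p := Triangle.epi₂ _ hT (Triangle.mor₃_eq_zero_of_mono₁ _ hT this)
  refine ⟨B', u, p, ?_, hu.symm⟩
  rw [← cancel_epi p, ← Category.assoc, ← hu]
  simp [Preadditive.sub_comp, hsp]

/-- Replacing the right hand term of a triangle by a retract. -/
lemma exists_retract_triangle {A M B : D} {f : A ⟶ M} {g : M ⟶ B} {δ : B ⟶ A⟦(1 : ℤ)⟧}
    (hT : Triangle.mk f g δ ∈ distTriang D) {B' : D} (u : B' ⟶ B) (p : B ⟶ B')
    (hup : u ≫ p = 𝟙 B') (hg : g ≫ p ≫ u = g) :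
    ∃ (A' : D) (f' : A' ⟶ M) (δ' : B' ⟶ A'⟦(1 : ℤ)⟧) (i : A' ⟶ A) (q : A ⟶ A'),
      (Triangle.mk f' (g ≫ p) δ' ∈ distTriang D) ∧ i ≫ q = 𝟙 A' := by
  obtain ⟨A', f', δ', hT'⟩ := distinguished_cocone_triangle₁ (g ≫ p)
  obtain ⟨a, ha1, ha2⟩ : ∃ a : A' ⟶ A, f' = a ≫ f ∧ δ' ≫ a⟦(1 : ℤ)⟧' = u ≫ δ := by
    obtain ⟨a, ha1, ha2⟩ := complete_distinguished_triangle_morphism₁ _ _ hT' hT (𝟙 M) u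
      (show (g ≫ p) ≫ u = 𝟙 M ≫ g by simp [hg])
    exact ⟨a, (Category.comp_id f').symm.trans ha1, ha2⟩
  obtain ⟨b, hb1, hb2⟩ : ∃ b : A ⟶ A', f = b ≫ f' ∧ δ ≫ b⟦(1 : ℤ)⟧' = p ≫ δ' := by
    obtain ⟨b, hb1, hb2⟩ := complete_distinguished_triangle_morphism₁ _ _ hT hT' (𝟙 M) p
      (show g ≫ p = 𝟙 M ≫ g ≫ p by simp)
    exact ⟨b, (Category.comp_id f).symm.trans hb1, hb2⟩
  let φ : Triangle.mk f' (g ≫ p) δ' ⟶ Triangle.mk f' (g ≫ p) δ' :=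
    { hom₁ := a ≫ b
      hom₂ := 𝟙 M
      hom₃ := 𝟙 B'
      comm₁ := by
        change f' ≫ 𝟙 M = (a ≫ b) ≫ f'
        rw [Category.comp_id, Category.assoc, ← hb1, ha1]
      comm₂ := by
        change (g ≫ p) ≫ 𝟙 B' = 𝟙 M ≫ (g ≫ p)
        simp
      comm₃ := by
        change δ' ≫ (a ≫ b)⟦(1 : ℤ)⟧' = 𝟙 B' ≫ δ'
        rw [CategoryTheory.Functor.map_comp, ← Category.assoc, ha2, Category.assoc, hb2,
          reassoc_of% hup]
        simp }
  have : IsIso φ.hom₁ := isIso₁_of_isIso₂₃ φ hT' hT' (inferInstanceAs (IsIso (𝟙 M)))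
    (inferInstanceAs (IsIso (𝟙 B')))
  have h2 : IsIso (a ≫ b) := this
  exact ⟨A', f', δ', a, b ≫ inv (a ≫ b), hT', by rw [← Category.assoc, IsIso.hom_inv_id]⟩

end Basics

section Functor

set_option linter.unusedSectionVars false

variable {C₁ : Type*} [Category C₁] [Preadditive C₁] [HasZeroObject C₁] [HasShift C₁ ℤ]
  [∀ n : ℤ, (CategoryTheory.shiftFunctor C₁ n).Additive] [Pretriangulated C₁]
  {C₂ : Type*} [Category C₂] [Preadditive C₂] [HasZeroObject C₂] [HasShift C₂ ℤ]
  [∀ n : ℤ, (CategoryTheory.shiftFunctor C₂ n).Additive] [Pretriangulated C₂]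
  {w₁ : WeightStructure C₁} {w₂ : WeightStructure C₂}
  {r : C₁ ⥤ C₂} [r.Additive] [r.CommShift ℤ] [r.IsTriangulated]

/-- pure objects of weight `n`. -/
def pureN (w : WeightStructure C₁) (n : ℤ) : Set C₁ := w.leN n ∩ w.geN n

lemma map_leN (hwe : WeightExact w₁ w₂ r) {n : ℤ} {X : C₁} (hX : X ∈ w₁.leN n) :
    r.obj X ∈ w₂.leN n :=
  le_iso w₂ ((r.commShiftIso (-n)).app X) (hwe.1 _ hX)

lemma map_geN (hwe : WeightExact w₁ w₂ r) {n : ℤ} {X : C₁} (hX : X ∈ w₁.geN n) :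
    r.obj X ∈ w₂.geN n :=
  ge_iso w₂ ((r.commShiftIso (-n)).app X) (hwe.2 _ hX)

variable {A M B : C₁} {f : A ⟶ M} {g : M ⟶ B} {δ : B ⟶ A⟦(1 : ℤ)⟧} in
variable (r) in
lemma map_tri (hT : Triangle.mk f g δ ∈ distTriang C₁) :
    Triangle.mk (r.map f) (r.map g) (r.map δ ≫ (r.commShiftIso (1 : ℤ)).hom.app A)
      ∈ distTriang C₂ := r.map_distinguished _ hT

variable {A M B : C₁} {f : A ⟶ M} {g : M ⟶ B} {δ : B ⟶ A⟦(1 : ℤ)⟧} in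
lemma map_yo3 (hT : Triangle.mk f g δ ∈ distTriang C₁) {W : C₂} (h : r.obj B ⟶ W)
    (hh : r.map g ≫ h = 0) : ∃ k : r.obj (A⟦(1 : ℤ)⟧) ⟶ W, h = r.map δ ≫ k := by
  obtain ⟨k, hk⟩ := yo3 (map_tri r hT) h hh
  exact ⟨(r.commShiftIso (1 : ℤ)).hom.app A ≫ k, by rw [hk, Category.assoc]⟩

lemma pure_shift {w : WeightStructure C₁} {n : ℤ} {X : C₁} (hX : X ∈ pureN w n) :
    X⟦-n⟧ ∈ w.heart :=
  ⟨leN_shift w (by omega) hX.1, geN_shift w (by omega) hX.2⟩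

lemma pure_unshift {w : WeightStructure C₁} {n : ℤ} {X : C₁} (hX : X⟦-n⟧ ∈ w.heart) :
    X ∈ pureN w n :=
  ⟨le_iso w ((shiftFunctorZero' C₁ (-0) (by simp)).app _) hX.1,
    ge_iso w ((shiftFunctorZero' C₁ (-0) (by simp)).app _) hX.2⟩

lemma full_n (hfull : ∀ X Y : C₁, X ∈ w₁.heart → Y ∈ w₁.heart →
      ∀ g : r.obj X ⟶ r.obj Y, ∃ f : X ⟶ Y, r.map f = g) (n : ℤ) {X Y : C₁}
    (hX : X ∈ pureN w₁ n) (hY : Y ∈ pureN w₁ n) (g : r.obj X ⟶ r.obj Y) :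
    ∃ f : X ⟶ Y, r.map f = g := by
  obtain ⟨f', hf'⟩ := hfull _ _ (pure_shift hX) (pure_shift hY)
    ((r.commShiftIso (-n)).hom.app X ≫ g⟦-n⟧' ≫ (r.commShiftIso (-n)).inv.app Y)
  obtain ⟨f, rfl⟩ := (CategoryTheory.shiftFunctor C₁ (-n)).map_surjective f'
  refine ⟨f, (CategoryTheory.shiftFunctor C₂ (-n)).map_injective ?_⟩
  have := (r.commShiftIso (-n)).hom.naturality f
  simp only [Functor.comp_map] at this
  rw [hf'] at this
  simpa using this.symm

lemma cons_n (hcons : ∀ X Y : C₁, X ∈ w₁.heart → Y ∈ w₁.heart →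
      ∀ f : X ⟶ Y, IsIso (r.map f) → IsIso f) (n : ℤ) {X Y : C₁}
    (hX : X ∈ pureN w₁ n) (hY : Y ∈ pureN w₁ n) (f : X ⟶ Y) (hf : IsIso (r.map f)) : IsIso f := by
  have h1 : IsIso (r.map (f⟦-n⟧')) := by
    have h2 : IsIso ((CategoryTheory.shiftFunctor C₁ (-n) ⋙ r).map f) :=
      (NatIso.isIso_map_iff (r.commShiftIso (-n)) f).2
        (by change IsIso ((r.map f)⟦-n⟧'); infer_instance)
    exact h2
  have h3 : IsIso (f⟦-n⟧') := hcons _ _ (pure_shift hX) (pure_shift hY) _ h1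
  exact isIso_of_reflects_iso f (CategoryTheory.shiftFunctor C₁ (-n))

/-- The ring homomorphism induced on endomorphisms. -/
def endHom (r : C₁ ⥤ C₂) [r.Additive] (X : C₁) :
    CategoryTheory.End X →+* CategoryTheory.End (r.obj X) where
  toFun x := r.map x
  map_one' := r.map_id X
  map_mul' x y := r.map_comp y x
  map_zero' := r.map_zero X X
  map_add' _ _ := r.map_add

lemma idem_0 (hsemiprimary : SemiprimaryOn w₁.heart) (hpseudoabelian : PseudoAbelianOn w₁.heart)
    (hfull : ∀ X Y : C₁, X ∈ w₁.heart → Y ∈ w₁.heart →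
      ∀ g : r.obj X ⟶ r.obj Y, ∃ f : X ⟶ Y, r.map f = g)
    (hcons : ∀ X Y : C₁, X ∈ w₁.heart → Y ∈ w₁.heart →
      ∀ f : X ⟶ Y, IsIso (r.map f) → IsIso f) {X : C₁} (hX : X ∈ w₁.heart)
    (e : r.obj X ⟶ r.obj X) (he : e ≫ e = e) :
    ∃ (Z : C₁) (p : X ⟶ Z) (i : Z ⟶ X), Z ∈ w₁.heart ∧ i ≫ p = 𝟙 Z ∧ r.map (p ≫ i) = e := by
  have key : ∀ x ∈ RingHom.ker (endHom r X), IsNilpotent x := by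
    intro x hx
    have hx0 : endHom r X x = 0 := hx
    obtain ⟨-, N, hN⟩ := hsemiprimary X hX
    have hrad : x ∈ ringRadical (CategoryTheory.End X) := by
      refine TwoSidedIdeal.mem_jacobson_iff.2 fun y => ?_
      have hmap : endHom r X (y * x + 1) = 1 := by
        rw [map_add, map_mul, hx0, mul_zero, zero_add, map_one]
      have hu : IsIso (C := C₁) (X := X) (Y := X) (y * x + 1 : CategoryTheory.End X) := by
        apply hcons X X hX hX
        have : r.map (X := X) (Y := X) (y * x + 1 : CategoryTheory.End X) = 𝟙 _ := hmap
        rw [this]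
        infer_instance
      obtain ⟨z, hz⟩ : ∃ z : CategoryTheory.End X, z * (y * x + 1) = 1 := by
        obtain ⟨z, hz1, hz2⟩ := hu.out
        exact ⟨z, hz1⟩
      refine ⟨z, ?_⟩
      have h0 : z * y * x + z - 1 = 0 := by
        rw [← hz, mul_add, mul_one, mul_assoc, sub_self]
      rw [h0]
      exact zero_mem _
    refine ⟨N, ?_⟩
    have := hN (fun _ => x) (fun _ => hrad)
    simpa using this
  obtain ⟨e0, he0⟩ := hfull X X hX hX e
  obtain ⟨e', h1, h2⟩ := exists_isIdempotentElem_eq_of_ker_isNilpotent (endHom r X) key e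
    ⟨e0, he0⟩ he
  obtain ⟨Z, hZ, p, i, hpi, hip⟩ := hpseudoabelian X hX e' h1
  exact ⟨Z, p, i, hZ, hip, by rw [hpi]; exact h2⟩

lemma idem_n (hsemiprimary : SemiprimaryOn w₁.heart) (hpseudoabelian : PseudoAbelianOn w₁.heart)
    (hfull : ∀ X Y : C₁, X ∈ w₁.heart → Y ∈ w₁.heart →
      ∀ g : r.obj X ⟶ r.obj Y, ∃ f : X ⟶ Y, r.map f = g)
    (hcons : ∀ X Y : C₁, X ∈ w₁.heart → Y ∈ w₁.heart →
      ∀ f : X ⟶ Y, IsIso (r.map f) → IsIso f) (n : ℤ) {X : C₁} (hX : X ∈ pureN w₁ n)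
    (e : r.obj X ⟶ r.obj X) (he : e ≫ e = e) :
    ∃ (Z : C₁) (p : X ⟶ Z) (i : Z ⟶ X), Z ∈ pureN w₁ n ∧ i ≫ p = 𝟙 Z ∧ r.map (p ≫ i) = e := by
  obtain ⟨Z', p', i', hZ', h1, h2⟩ := idem_0 hsemiprimary hpseudoabelian hfull hcons
    (pure_shift hX) ((r.commShiftIso (-n)).hom.app X ≫ e⟦-n⟧' ≫ (r.commShiftIso (-n)).inv.app X)
    (by
      have : e⟦-n⟧' ≫ e⟦-n⟧' = e⟦-n⟧' := by rw [← CategoryTheory.Functor.map_comp, he]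
      simp [reassoc_of% this])
  let S := CategoryTheory.shiftFunctor C₁ (-n)
  let Z := S.objPreimage Z'
  let ι : S.obj Z ≅ Z' := S.objObjPreimageIso Z'
  obtain ⟨p, hp⟩ := S.map_surjective (X := X) (Y := Z) (p' ≫ ι.inv)
  obtain ⟨i, hi⟩ := S.map_surjective (X := Z) (Y := X) (ι.hom ≫ i')
  refine ⟨Z, p, i, pure_unshift ?_, S.map_injective ?_, ?_⟩
  · exact ⟨leN_retract w₁ ι.hom ι.inv (by simp) hZ'.1, geN_retract w₁ ι.hom ι.inv (by simp) hZ'.2⟩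
  · rw [CategoryTheory.Functor.map_comp, hp, hi]
    simp [reassoc_of% h1]
  · refine (CategoryTheory.shiftFunctor C₂ (-n)).map_injective ?_
    have h3 : S.map (p ≫ i) = p' ≫ i' := by
      rw [CategoryTheory.Functor.map_comp, hp, hi]; simp
    have := (r.commShiftIso (-n)).hom.naturality (p ≫ i)
    simp only [Functor.comp_map] at this
    rw [show (CategoryTheory.shiftFunctor C₁ (-n)).map (p ≫ i) = p' ≫ i' from h3, h2] at this
    simpa using this.symm

end Functor

section Main

variable {C₁ : Type*} [Category C₁] [Preadditive C₁] [HasZeroObject C₁] [HasShift C₁ ℤ]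
  [∀ n : ℤ, (CategoryTheory.shiftFunctor C₁ n).Additive] [Pretriangulated C₁]
  {C₂ : Type*} [Category C₂] [Preadditive C₂] [HasZeroObject C₂] [HasShift C₂ ℤ]
  [∀ n : ℤ, (CategoryTheory.shiftFunctor C₂ n).Additive] [Pretriangulated C₂]
  {w₁ : WeightStructure C₁} {w₂ : WeightStructure C₂}
  {r : C₁ ⥤ C₂} [r.Additive] [r.CommShift ℤ] [r.IsTriangulated]

/-- One step of weight conservativity. -/
lemma geN_step (hwe : WeightExact w₁ w₂ r)
    (hfull : ∀ X Y : C₁, X ∈ w₁.heart → Y ∈ w₁.heart →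
      ∀ g : r.obj X ⟶ r.obj Y, ∃ f : X ⟶ Y, r.map f = g)
    (hcons : ∀ X Y : C₁, X ∈ w₁.heart → Y ∈ w₁.heart →
      ∀ f : X ⟶ Y, IsIso (r.map f) → IsIso f) {n : ℤ} {B : C₁} (hB : B ∈ w₁.geN n)
    (hrB : r.obj B ∈ w₂.geN (n + 1)) : B ∈ w₁.geN (n + 1) := by
  obtain ⟨P, Q, j, q, η, hT, hP, hQ⟩ := decomp w₁ n (n + 1) rfl B
  have hPp : P ∈ pureN w₁ n := ⟨hP, geN_left w₁ hT hB hQ⟩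
  have hj : r.map j = 0 := orth w₂ (by omega) (map_leN hwe hP) hrB _
  -- the rotated triangle
  obtain ⟨v, hv⟩ : ∃ v : Q⟦(-1 : ℤ)⟧ ⟶ P, v = (Triangle.mk j q η).invRotate.mor₁ := ⟨_, rfl⟩
  have hT' := inv_rot_of_distTriang _ hT
  have hvj : v ≫ j = 0 := by
    rw [hv]; exact comp_distTriang_mor_zero₁₂ _ hT'
  have hr : ∃ k : r.obj P ⟶ r.obj (Q⟦(-1 : ℤ)⟧), 𝟙 _ = k ≫ r.map v := by
    rw [hv]
    exact Triangle.coyoneda_exact₂ _ (r.map_distinguished _ hT') (𝟙 (r.obj P))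
      (by rw [show (r.mapTriangle.obj (Triangle.mk j q η).invRotate).mor₂ = 0 from hj]
          exact comp_zero)
  obtain ⟨k, hk⟩ := hr
  obtain ⟨P', Q', j', q', η', hT2, hP', hQ'⟩ := decomp w₁ n (n + 1) rfl (Q⟦(-1 : ℤ)⟧)
  have hP'p : P' ∈ pureN w₁ n :=
    ⟨hP', geN_left w₁ hT2 (geN_shift w₁ (by omega) hQ) hQ'⟩
  obtain ⟨l, hl⟩ := coyo2 (map_tri r hT2) k
    (orth w₂ (by omega) (map_leN hwe hP) (map_geN hwe hQ') _)
  obtain ⟨l', rfl⟩ := full_n hfull n hPp hP'p l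
  have hiso : IsIso (l' ≫ j' ≫ v) := by
    apply cons_n hcons n hPp hPp
    have : r.map (l' ≫ j' ≫ v) = 𝟙 _ := by
      rw [hk, hl]; simp
    rw [this]
    infer_instance
  have hj0 : j = 0 := by
    have h1 : (l' ≫ j' ≫ v) ≫ j = 0 := by
      rw [Category.assoc, Category.assoc, hvj, comp_zero, comp_zero]
    rw [← IsIso.inv_hom_id_assoc (l' ≫ j' ≫ v) j, h1, comp_zero]
  obtain ⟨ρ, hρ⟩ := yo2 hT (𝟙 B) (by simp [hj0])
  exact geN_retract w₁ q ρ hρ.symm hQ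

lemma geN_conserv (hwe : WeightExact w₁ w₂ r)
    (hfull : ∀ X Y : C₁, X ∈ w₁.heart → Y ∈ w₁.heart →
      ∀ g : r.obj X ⟶ r.obj Y, ∃ f : X ⟶ Y, r.map f = g)
    (hcons : ∀ X Y : C₁, X ∈ w₁.heart → Y ∈ w₁.heart →
      ∀ f : X ⟶ Y, IsIso (r.map f) → IsIso f) {n m : ℤ} (hnm : n ≤ m) {B : C₁}
    (hB : B ∈ w₁.geN n) (hrB : r.obj B ∈ w₂.geN m) : B ∈ w₁.geN m := by
  induction m, hnm using Int.leInduction with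
  | base => exact hB
  | succ k _ ih => exact geN_step hwe hfull hcons (ih (geN_pred w₂ hrB)) hrB

/-- The hard direction. -/
lemma without_of_map (hwe : WeightExact w₁ w₂ r)
    (hsemiprimary : SemiprimaryOn w₁.heart) (hpseudoabelian : PseudoAbelianOn w₁.heart)
    (hfull : ∀ X Y : C₁, X ∈ w₁.heart → Y ∈ w₁.heart →
      ∀ g : r.obj X ⟶ r.obj Y, ∃ f : X ⟶ Y, r.map f = g)
    (hcons : ∀ X Y : C₁, X ∈ w₁.heart → Y ∈ w₁.heart →
      ∀ f : X ⟶ Y, IsIso (r.map f) → IsIso f) {M : C₁} {α β : ℤ} (hαβ : α ≤ β)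
    (h : WithoutWeights w₂ α β (r.obj M)) : WithoutWeights w₁ α β M := by
  obtain ⟨X, Y, a, b, c, hT2, hX, hY⟩ := h
  obtain ⟨A, B, f, g, δ, hT, hA, hB⟩ := decomp w₁ (α - 1) α (by omega) M
  have hA1 : A⟦(1 : ℤ)⟧ ∈ w₁.leN α := leN_shift w₁ (by omega) hA
  -- `Y` is a retract of `r B`
  obtain ⟨y, hy⟩ := yo2 (map_tri r hT) b (orth w₂ (by omega) (map_leN hwe hA) hY _)
  obtain ⟨x, hx⟩ := yo2 hT2 (r.map g) (orth w₂ (by omega) hX (map_geN hwe hB) _)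
  have hxy : x ≫ y = 𝟙 Y := by
    obtain ⟨k, hk⟩ := yo3 hT2 (x ≫ y - 𝟙 Y) (by
      rw [Preadditive.comp_sub, ← Category.assoc, ← hx, ← hy, Category.comp_id, sub_self])
    rw [show k = 0 from orth w₂ (by omega) (leN_shift w₂ (m := α) (by omega) hX) hY k,
      comp_zero] at hk
    exact sub_eq_zero.1 hk
  obtain ⟨e, he⟩ : ∃ e : r.obj B ⟶ r.obj B, e = 𝟙 _ - y ≫ x := ⟨_, rfl⟩
  have hee : e ≫ e = e := by
    rw [he]
    simp [Preadditive.comp_sub, Preadditive.sub_comp, reassoc_of% hxy]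
  obtain ⟨t₀, ht₀⟩ := map_yo3 (r := r) hT e (by
    rw [he, Preadditive.comp_sub, ← Category.assoc, ← hy, ← hx, Category.comp_id, sub_self])
  -- pure part of `B`
  obtain ⟨P, Q, j, q, η, hTB, hP, hQ⟩ := decomp w₁ α (α + 1) rfl B
  have hPp : P ∈ pureN w₁ α := ⟨hP, geN_left w₁ hTB hB hQ⟩
  obtain ⟨t₁, ht₁⟩ := coyo2 (map_tri r hTB) t₀
    (orth w₂ (by omega) (map_leN hwe hA1) (map_geN hwe hQ) _)
  have hfac : r.map δ ≫ t₁ ≫ r.map j = e := by rw [ht₀, ht₁]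
  obtain ⟨ε, hε⟩ : ∃ ε : r.obj P ⟶ r.obj P, ε = r.map j ≫ e ≫ r.map δ ≫ t₁ := ⟨_, rfl⟩
  have hεε : ε ≫ ε = ε := by
    rw [hε]
    simp only [Category.assoc]
    rw [reassoc_of% hfac, reassoc_of% hee, reassoc_of% hee]
  obtain ⟨Z, p₀, i₀, hZ, hip, hpi⟩ :=
    idem_n hsemiprimary hpseudoabelian hfull hcons α hPp ε hεε
  -- lift the projection
  obtain ⟨E, N, d, l, η', hTA, hE, hN⟩ := decomp w₁ (α - 1) α (by omega) (A⟦(1 : ℤ)⟧)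
  have hNp : N ∈ pureN w₁ α := ⟨leN_right w₁ hTA hA1 hE, hN⟩
  obtain ⟨τ, hτ⟩ := yo2 (map_tri r hTA) (t₁ ≫ r.map p₀)
    (orth w₂ (by omega) (map_leN hwe hE) (map_geN hwe hZ.2) _)
  obtain ⟨t', rfl⟩ := full_n hfull α hNp hZ τ
  obtain ⟨θ, hθ⟩ : ∃ θ : Z ⟶ Z, θ = i₀ ≫ j ≫ δ ≫ l ≫ t' := ⟨_, rfl⟩
  have hrip : r.map i₀ ≫ r.map p₀ = 𝟙 _ := by
    rw [← CategoryTheory.Functor.map_comp, hip, CategoryTheory.Functor.map_id]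
  rw [CategoryTheory.Functor.map_comp] at hpi
  have hiε : r.map i₀ ≫ ε = r.map i₀ := by rw [← hpi, reassoc_of% hrip]
  have hrθ : r.map θ = 𝟙 _ := by
    rw [hθ]
    simp only [CategoryTheory.Functor.map_comp]
    rw [← hτ, ← hiε, hε]
    simp only [Category.assoc]
    rw [reassoc_of% hfac, reassoc_of% hee]
    have : r.map i₀ ≫ (r.map j ≫ e ≫ r.map δ ≫ t₁) ≫ r.map p₀ = 𝟙 _ := by
      rw [← hε, reassoc_of% hiε, hrip]
    simpa using this
  have hθiso : IsIso θ := by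
    apply cons_n hcons α hZ hZ
    rw [hrθ]; infer_instance
  have hrθi : r.map (inv θ) = 𝟙 _ := by
    rw [Functor.map_inv]
    simp [hrθ]
  obtain ⟨B', u, p, hup, hpu⟩ := exists_complement (i₀ ≫ j) (δ ≫ l ≫ t' ≫ inv θ) (by
    have : (i₀ ≫ j ≫ δ ≫ l ≫ t') ≫ inv θ = 𝟙 Z := by rw [← hθ, IsIso.hom_inv_id]
    simpa using this)
  have hrpu : r.map p ≫ r.map u = y ≫ x := by
    rw [← CategoryTheory.Functor.map_comp, hpu, Functor.map_sub, CategoryTheory.Functor.map_id]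
    simp only [CategoryTheory.Functor.map_comp, hrθi, Category.id_comp, Category.assoc]
    rw [← reassoc_of% hτ, reassoc_of% hpi, hε]
    simp only [Category.assoc]
    rw [reassoc_of% hfac, hfac, hee, hee, he]
    simp
  have hrup : r.map u ≫ r.map p = 𝟙 _ := by
    rw [← CategoryTheory.Functor.map_comp, hup, CategoryTheory.Functor.map_id]
  have hrB' : r.obj B' ∈ w₂.geN (β + 1) :=
    geN_retract w₂ (r.map u ≫ y) (x ≫ r.map p) (by
      rw [Category.assoc, ← reassoc_of% hrpu, hrup, Category.comp_id, hrup]) hY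
  have hB' : B' ∈ w₁.geN (β + 1) :=
    geN_conserv hwe hfull hcons (n := α) (by omega) (geN_retract w₁ u p hup hB) hrB'
  obtain ⟨A', f', δ', i, k, hT', hik⟩ := exists_retract_triangle hT u p hup (by
    rw [hpu, Preadditive.comp_sub]
    simp [reassoc_of% (z23 hT)])
  exact ⟨A', B', f', g ≫ p, δ', hT', leN_retract w₁ i k hik hA, hB'⟩

end Main

theorem statement7
    (F : Type*) [Field F] [CharZero F]
    {C₁ : Type*} [Category C₁] [Preadditive C₁] [HasZeroObject C₁] [HasShift C₁ ℤ]
    [∀ n : ℤ, (CategoryTheory.shiftFunctor C₁ n).Additive] [Pretriangulated C₁] [CategoryTheory.Linear F C₁]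
    {C₂ : Type*} [Category C₂] [Preadditive C₂] [HasZeroObject C₂] [HasShift C₂ ℤ]
    [∀ n : ℤ, (CategoryTheory.shiftFunctor C₂ n).Additive] [Pretriangulated C₂] [CategoryTheory.Linear F C₂]
    (w₁ : WeightStructure C₁) (w₂ : WeightStructure C₂)
    (r : C₁ ⥤ C₂) [r.Additive] [Functor.Linear F r] [r.CommShift ℤ] [r.IsTriangulated]
    (hbounded : w₁.Bounded)
    (hsemiprimary : SemiprimaryOn w₁.heart) (hpseudoabelian : PseudoAbelianOn w₁.heart)
    (hwe : WeightExact w₁ w₂ r)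
    (hfull : ∀ X Y : C₁, X ∈ w₁.heart → Y ∈ w₁.heart →
      ∀ g : r.obj X ⟶ r.obj Y, ∃ f : X ⟶ Y, r.map f = g)
    (hcons : ∀ X Y : C₁, X ∈ w₁.heart → Y ∈ w₁.heart →
      ∀ f : X ⟶ Y, IsIso (r.map f) → IsIso f)
    (M : C₁) (α β : ℤ) (hαβ : α ≤ β) :
    WithoutWeights w₁ α β M ↔ WithoutWeights w₂ α β (r.obj M) := by
  constructor
  · rintro ⟨A, B, f, g, δ, hT, hA, hB⟩
    exact ⟨_, _, _, _, _, map_tri r hT, map_leN hwe hA, map_geN hwe hB⟩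
  · exact without_of_map hwe hsemiprimary hpseudoabelian hfull hcons hαβ

end Paper
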